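/- Let (Ω, 𝓕, π) be a σ-finite measure space and for i = 0, 1 let νᵢ be a finite measure with density fᵢ = dνᵢ/dπ. Assume ν₁ ≪ ν₀ and ν₁(Ω) > 0, and let β ≥ 0. Then C_β := ∫ f₀(x)^{1/(1+β)} f₁(x)^{β/(1+β)} π(dx) ∈ (0, ∞), the infimum of D_KL(μ, ν₀) + β·D_KL(μ, ν₁) over all probability measures μ ≪ π equals −(1+β) log C_β, and the infimum is attained by the probability measure μ*_β with dμ*_β/dπ = C_β⁻¹ f₀^{1/(1+β)} f₁^{β/(1+β)}. -/

import Mathlib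

open MeasureTheory
open scoped Classical ENNReal

/-- Kullback–Leibler divergence: `D_KL(μ, ν) = ∫ log(dμ/dν) dμ` if `μ ≪ ν` (and the
log-likelihood ratio is integrable), and `∞` otherwise. Valued in `EReal = (-∞, ∞]`. -/
noncomputable def klDiv {Ω : Type*} [MeasurableSpace Ω] (μ ν : Measure Ω) : EReal :=
  if μ ≪ ν ∧ Integrable (llr μ ν) μ then ((∫ x, llr μ ν x ∂μ : ℝ) : EReal) else ⊤

/-- The normalizing constant `C_β = ∫ f₀^{1/(1+β)} f₁^{β/(1+β)} dπ` of the geometric mixture. -/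
noncomputable def geomConst {Ω : Type*} [MeasurableSpace Ω] (π : Measure Ω)
    (f₀ f₁ : Ω → ℝ≥0∞) (β : ℝ) : ℝ≥0∞ :=
  ∫⁻ x, f₀ x ^ (1 / (1 + β)) * f₁ x ^ (β / (1 + β)) ∂π

/-- The geometric-mixture measure `μ*_β` with `dμ*_β/dπ = C_β⁻¹ f₀^{1/(1+β)} f₁^{β/(1+β)}`. -/
noncomputable def geomMix {Ω : Type*} [MeasurableSpace Ω] (π : Measure Ω)
    (f₀ f₁ : Ω → ℝ≥0∞) (β : ℝ) : Measure Ω :=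
  π.withDensity fun x => (geomConst π f₀ f₁ β)⁻¹ * (f₀ x ^ (1 / (1 + β)) * f₁ x ^ (β / (1 + β)))

/-!
Write `M = geomMix π f₀ f₁ β` and `C = geomConst π f₀ f₁ β`. For every `μ ≪ M`,
`llr μ ν₀ + β * llr μ ν₁ = (1 + β) * (llr μ M - log C)` almost everywhere for `μ`. Integrating, the
cost of a probability measure `μ` is `(1 + β) * (D_KL(μ, M) - log C)` whenever it is finite, so
Gibbs' inequality gives the lower bound, with equality at `μ = M` provided that `M` itself has
finite cost. The density `dM/dν₀` is proportional to `(f₁ / f₀) ^ (β / (1 + β))`; as `f₁ / f₀` is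
`ν₀`-integrable and the exponent is less than `1`, this density is in `L^p(ν₀)` for some `p > 1`,
which makes `D_KL(M, ν₀)` finite. For `β > 0`, finiteness of `D_KL(M, ν₁)` follows because
exchanging `f₀` and `f₁` while replacing `β` by `β⁻¹` leaves `M` and `C` unchanged.
-/

section AbsolutelyContinuous

variable {Ω : Type*} [MeasurableSpace Ω] {μ ν : Measure Ω} {f g : Ω → ℝ≥0∞}

theorem absolutelyContinuous_withDensity_iff (hf : AEMeasurable f ν) :
    μ ≪ ν.withDensity f ↔ μ ≪ ν ∧ ∀ᵐ x ∂μ, f x ≠ 0 := by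
  constructor
  · intro h
    exact ⟨h.trans (withDensity_absolutelyContinuous ν f),
      h.ae_le ((ae_withDensity_iff' hf).2 (.of_forall fun _ hx ↦ hx))⟩
  · rintro ⟨hμν, hf0⟩ s hs
    rw [← Measure.measure_inter_eq_of_ae (t := {x | f x ≠ 0}) hf0]
    exact hμν ((withDensity_apply_eq_zero' hf).1 hs)

theorem mutuallySingular_withDensity_of_mul_ae_eq_zero (hf : AEMeasurable f ν)
    (hg : AEMeasurable g ν) (hfg : ∀ᵐ x ∂ν, f x * g x = 0) :
    ν.withDensity f ⟂ₘ ν.withDensity g := by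
  refine Measure.MutuallySingular.mk (s := {x | f x = 0}) (t := {x | f x ≠ 0}) ?_ ?_
    fun x _ ↦ em (f x = 0)
  · refine (withDensity_apply_eq_zero' hf).2 (measure_mono_null ?_ measure_empty)
    exact fun x hx ↦ hx.1 hx.2
  · refine (withDensity_apply_eq_zero' hg).2 (measure_mono_null ?_ hfg)
    exact fun x hx ↦ mul_ne_zero hx.2 hx.1

theorem lintegral_ne_top_of_isFiniteMeasure_withDensity [IsFiniteMeasure (ν.withDensity f)] :
    ∫⁻ x, f x ∂ν ≠ ⊤ := by
  rw [← setLIntegral_univ, ← withDensity_apply f MeasurableSet.univ]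
  exact measure_ne_top _ _

theorem ae_ne_top_of_isFiniteMeasure_withDensity [IsFiniteMeasure (ν.withDensity f)]
    (hf : AEMeasurable f ν) : ∀ᵐ x ∂ν, f x ≠ ⊤ :=
  (ae_lt_top' hf lintegral_ne_top_of_isFiniteMeasure_withDensity).mono fun _ ↦ LT.lt.ne

end AbsolutelyContinuous

section LogLikelihoodRatio

variable {Ω : Type*} [MeasurableSpace Ω] {μ ν κ : Measure Ω}

theorem llr_ae_eq_llr_add_llr [SigmaFinite μ] [SigmaFinite ν] [SigmaFinite κ] (hμν : μ ≪ ν)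
    (hνκ : ν ≪ κ) : llr μ κ =ᵐ[μ] fun x ↦ llr μ ν x + llr ν κ x := by
  have hμκ : μ ≪ κ := hμν.trans hνκ
  filter_upwards [hμκ.ae_le (Measure.rnDeriv_mul_rnDeriv (κ := κ) hμν), Measure.rnDeriv_pos hμκ,
    hμκ.ae_le (Measure.rnDeriv_lt_top μ κ)] with x hmul hpos hlt
  have hne : (μ.rnDeriv ν x).toReal * (ν.rnDeriv κ x).toReal ≠ 0 := by
    rw [← ENNReal.toReal_mul, ← Pi.mul_apply, hmul]
    exact (ENNReal.toReal_pos hpos.ne' hlt.ne).ne'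
  rw [llr, llr, llr, ← hmul, Pi.mul_apply, ENNReal.toReal_mul,
    Real.log_mul (left_ne_zero_of_mul hne) (right_ne_zero_of_mul hne)]

theorem abs_mul_log_le_one_add_rpow_div {x p : ℝ} (hx : 0 ≤ x) (hp : 1 < p) :
    |x * Real.log x| ≤ 1 + x ^ p / (p - 1) := by
  have hp' : 0 < p - 1 := sub_pos.2 hp
  have hrpow : 0 ≤ x ^ p / (p - 1) := by positivity
  rcases hx.eq_or_lt with rfl | hx0
  · rw [zero_mul, abs_zero]
    linarith
  rcases le_total x 1 with hx1 | hx1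
  · rw [mul_comm]
    linarith [Real.abs_log_mul_self_lt x hx0 hx1]
  · calc |x * Real.log x| = x * Real.log x :=
          abs_of_nonneg (mul_nonneg hx (Real.log_nonneg hx1))
      _ ≤ x * (x ^ (p - 1) / (p - 1)) := by
          gcongr
          exact Real.log_le_rpow_div hx hp'
      _ = x ^ p / (p - 1) := by
          rw [mul_div_assoc', ← Real.rpow_one_add' hx (by linarith), add_sub_cancel]
      _ ≤ 1 + x ^ p / (p - 1) := by linarith

theorem integrable_llr_of_lintegral_rnDeriv_rpow_ne_top [SigmaFinite μ] [IsFiniteMeasure ν]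
    (hμν : μ ≪ ν) {p : ℝ} (hp : 1 < p) (h : ∫⁻ x, μ.rnDeriv ν x ^ p ∂ν ≠ ⊤) :
    Integrable (llr μ ν) μ := by
  have hrpow : Integrable (fun x ↦ (μ.rnDeriv ν x).toReal ^ p) ν := by
    simpa only [ENNReal.toReal_rpow] using
      integrable_toReal_of_lintegral_ne_top (by fun_prop) h
  rw [← integrable_rnDeriv_mul_log_iff hμν]
  refine ((integrable_const 1).add (hrpow.div_const (p - 1))).mono' ?_ (.of_forall fun x ↦ ?_)
  · exact Measurable.aestronglyMeasurable (by fun_prop)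
  · exact abs_mul_log_le_one_add_rpow_div ENNReal.toReal_nonneg hp

end LogLikelihoodRatio

section KLDiv

variable {Ω : Type*} [MeasurableSpace Ω] {μ ν ν₀ ν₁ : Measure Ω} {β : ℝ}

theorem klDiv_ne_top_iff : klDiv μ ν ≠ ⊤ ↔ μ ≪ ν ∧ Integrable (llr μ ν) μ := by
  unfold klDiv
  split_ifs with h <;> simp [h]

theorem klDiv_eq_integral_llr (h : klDiv μ ν ≠ ⊤) :
    klDiv μ ν = ((∫ x, llr μ ν x ∂μ : ℝ) : EReal) :=
  if_pos (klDiv_ne_top_iff.1 h)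

theorem klDiv_ne_bot : klDiv μ ν ≠ ⊥ := by
  unfold klDiv
  split_ifs <;> simp

theorem coe_mul_klDiv_ne_bot (hβ : 0 ≤ β) : (β : EReal) * klDiv μ ν ≠ ⊥ := by
  simp [EReal.mul_ne_bot, klDiv_ne_bot, hβ]

theorem klDiv_add_mul_klDiv_ne_top_iff (hβ : 0 ≤ β) :
    klDiv μ ν₀ + (β : EReal) * klDiv μ ν₁ ≠ ⊤ ↔
      klDiv μ ν₀ ≠ ⊤ ∧ (β ≠ 0 → klDiv μ ν₁ ≠ ⊤) := by
  rw [EReal.add_ne_top_iff_ne_top₂ klDiv_ne_bot (coe_mul_klDiv_ne_bot hβ)]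
  refine and_congr_right fun _ ↦ ?_
  rcases hβ.eq_or_lt with rfl | hβ
  · simp
  · simp [EReal.mul_ne_top, klDiv_ne_bot, hβ.le, hβ.not_ge, hβ.ne']

theorem integrable_llr_add_mul_llr (hβ : 0 ≤ β)
    (h : klDiv μ ν₀ + (β : EReal) * klDiv μ ν₁ ≠ ⊤) :
    Integrable (fun x ↦ llr μ ν₀ x + β * llr μ ν₁ x) μ := by
  obtain ⟨h₀, h₁⟩ := (klDiv_add_mul_klDiv_ne_top_iff hβ).1 h
  have hint₀ : Integrable (llr μ ν₀) μ := (klDiv_ne_top_iff.1 h₀).2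
  rcases eq_or_ne β 0 with rfl | hβ0
  · simpa only [zero_mul, add_zero] using hint₀
  · exact hint₀.add ((klDiv_ne_top_iff.1 (h₁ hβ0)).2.const_mul β)

theorem klDiv_add_mul_klDiv_eq_integral (hβ : 0 ≤ β)
    (h : klDiv μ ν₀ + (β : EReal) * klDiv μ ν₁ ≠ ⊤) :
    klDiv μ ν₀ + (β : EReal) * klDiv μ ν₁ =
      ((∫ x, (llr μ ν₀ x + β * llr μ ν₁ x) ∂μ : ℝ) : EReal) := by
  obtain ⟨h₀, h₁⟩ := (klDiv_add_mul_klDiv_ne_top_iff hβ).1 h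
  have hint₀ : Integrable (llr μ ν₀) μ := (klDiv_ne_top_iff.1 h₀).2
  rw [klDiv_eq_integral_llr h₀]
  rcases eq_or_ne β 0 with rfl | hβ0
  · simp
  · have hint₁ : Integrable (llr μ ν₁) μ := (klDiv_ne_top_iff.1 (h₁ hβ0)).2
    rw [klDiv_eq_integral_llr (h₁ hβ0), integral_add hint₀ (hint₁.const_mul β),
      integral_const_mul]
    norm_cast

end KLDiv

section GeometricMean

theorem mul_div_rpow_eq_rpow_mul_rpow {a b : ℝ≥0∞} (ha : a ≠ ⊤) {s t : ℝ} (hs : 0 < s) (ht : 0 ≤ t)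
    (hst : s + t = 1) : a * (b / a) ^ t = a ^ s * b ^ t := by
  rcases eq_or_ne a 0 with rfl | ha0
  · rw [zero_mul, ENNReal.zero_rpow_of_pos hs, zero_mul]
  · rw [ENNReal.div_rpow_of_nonneg _ _ ht, div_eq_mul_inv, ← ENNReal.rpow_neg, mul_left_comm,
      mul_comm (b ^ t)]
    nth_rewrite 1 [← ENNReal.rpow_one a]
    rw [← ENNReal.rpow_add _ _ ha0 ha, ← hst, add_neg_cancel_right]

-- At `x = 0` the identity holds because `Real.log 0 = 0`.
theorem log_rpow_of_nonneg {x : ℝ} (hx : 0 ≤ x) (y : ℝ) :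
    Real.log (x ^ y) = y * Real.log x := by
  rcases hx.eq_or_lt with rfl | hx
  · rcases eq_or_ne y 0 with rfl | hy <;> simp [*]
  · exact Real.log_rpow hx y

end GeometricMean

section GeomMix

variable {Ω : Type*} [MeasurableSpace Ω] {π μ : Measure Ω} {f₀ f₁ : Ω → ℝ≥0∞} {β : ℝ}

theorem geomConst_ne_zero (hf₀ : AEMeasurable f₀ π) (hf₁ : AEMeasurable f₁ π) (hβ : 0 ≤ β)
    (h : ¬ π.withDensity f₀ ⟂ₘ π.withDensity f₁) : geomConst π f₀ f₁ β ≠ 0 := by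
  contrapose! h
  rw [geomConst, lintegral_eq_zero_iff' (by fun_prop)] at h
  refine mutuallySingular_withDensity_of_mul_ae_eq_zero hf₀ hf₁ (h.mono fun x hx ↦ ?_)
  have ht : 0 ≤ β / (1 + β) := by positivity
  rw [mul_eq_zero]
  refine (mul_eq_zero.1 hx).imp (fun hx₀ ↦ ?_) fun hx₁ ↦ ?_
  · exact (ENNReal.rpow_eq_zero_iff_of_pos (by positivity)).1 hx₀
  · exact ((ENNReal.rpow_eq_zero_iff.1 hx₁).resolve_right fun h ↦ ht.not_gt h.2).1

theorem geomConst_ne_top [IsFiniteMeasure (π.withDensity f₀)] [IsFiniteMeasure (π.withDensity f₁)]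
    (hf₀ : AEMeasurable f₀ π) (hf₁ : AEMeasurable f₁ π) (hβ : 0 ≤ β) :
    geomConst π f₀ f₁ β ≠ ⊤ := by
  have hs : 0 ≤ 1 / (1 + β) := by positivity
  have ht : 0 ≤ β / (1 + β) := by positivity
  have hst : 1 / (1 + β) + β / (1 + β) = 1 := by field_simp
  refine ne_top_of_le_ne_top (ENNReal.mul_ne_top ?_ ?_)
    (ENNReal.lintegral_mul_norm_pow_le hf₀ hf₁ hs ht hst)
  · exact ENNReal.rpow_ne_top_of_nonneg hs lintegral_ne_top_of_isFiniteMeasure_withDensity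
  · exact ENNReal.rpow_ne_top_of_nonneg ht lintegral_ne_top_of_isFiniteMeasure_withDensity

theorem isFiniteMeasure_geomMix (hf₀ : AEMeasurable f₀ π) (hf₁ : AEMeasurable f₁ π) :
    IsFiniteMeasure (geomMix π f₀ f₁ β) := by
  refine isFiniteMeasure_withDensity ?_
  rw [lintegral_const_mul'' _ (by fun_prop), ← geomConst]
  exact ne_top_of_le_ne_top ENNReal.one_ne_top (ENNReal.inv_mul_le_one _)

theorem isProbabilityMeasure_geomMix (hf₀ : AEMeasurable f₀ π) (hf₁ : AEMeasurable f₁ π)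
    (hC0 : geomConst π f₀ f₁ β ≠ 0) (hCtop : geomConst π f₀ f₁ β ≠ ⊤) :
    IsProbabilityMeasure (geomMix π f₀ f₁ β) := by
  constructor
  rw [geomMix, withDensity_apply _ MeasurableSet.univ, setLIntegral_univ,
    lintegral_const_mul'' _ (by fun_prop), ← geomConst, ENNReal.inv_mul_cancel hC0 hCtop]

theorem geomConst_comm (hβ : 0 < β) : geomConst π f₀ f₁ β = geomConst π f₁ f₀ β⁻¹ := by
  have hs : 1 / (1 + β) = β⁻¹ / (1 + β⁻¹) := by field_simp; ring
  have ht : β / (1 + β) = 1 / (1 + β⁻¹) := by field_simp; ring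
  simp only [geomConst, hs, ht, mul_comm]

theorem geomMix_comm (hβ : 0 < β) : geomMix π f₀ f₁ β = geomMix π f₁ f₀ β⁻¹ := by
  have hs : 1 / (1 + β) = β⁻¹ / (1 + β⁻¹) := by field_simp; ring
  have ht : β / (1 + β) = 1 / (1 + β⁻¹) := by field_simp; ring
  simp only [geomMix, geomConst_comm hβ, hs, ht, mul_comm]

theorem absolutelyContinuous_geomMix_iff (hf₀ : AEMeasurable f₀ π) (hf₁ : AEMeasurable f₁ π)
    (hβ : 0 ≤ β) (hCtop : geomConst π f₀ f₁ β ≠ ⊤) :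
    μ ≪ geomMix π f₀ f₁ β ↔
      μ ≪ π.withDensity f₀ ∧ (β ≠ 0 → μ ≪ π.withDensity f₁) := by
  have hs : 0 < 1 / (1 + β) := by positivity
  have hdensity (x : Ω) : (geomConst π f₀ f₁ β)⁻¹ *
      (f₀ x ^ (1 / (1 + β)) * f₁ x ^ (β / (1 + β))) ≠ 0 ↔ f₀ x ≠ 0 ∧ (β ≠ 0 → f₁ x ≠ 0) := by
    rcases hβ.eq_or_lt with rfl | hβ
    · simp [hCtop]
    · have ht : 0 < β / (1 + β) := by positivity
      simp [hCtop, ENNReal.rpow_eq_zero_iff, -one_div, hs, ht, hs.not_gt, ht.not_gt, hβ.ne']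
  rw [geomMix, absolutelyContinuous_withDensity_iff (by fun_prop),
    absolutelyContinuous_withDensity_iff hf₀, absolutelyContinuous_withDensity_iff hf₁]
  simp only [hdensity, Filter.eventually_and, Filter.eventually_imp_distrib_left]
  tauto

theorem geomMix_eq_withDensity_left [IsFiniteMeasure (π.withDensity f₀)]
    (hf₀ : AEMeasurable f₀ π) (hf₁ : AEMeasurable f₁ π) (hβ : 0 ≤ β) :
    geomMix π f₀ f₁ β = (π.withDensity f₀).withDensity
      fun x ↦ (geomConst π f₀ f₁ β)⁻¹ * (f₁ x / f₀ x) ^ (β / (1 + β)) := by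
  have hs : 0 < 1 / (1 + β) := by positivity
  have ht : 0 ≤ β / (1 + β) := by positivity
  have hst : 1 / (1 + β) + β / (1 + β) = 1 := by field_simp
  rw [← withDensity_mul₀ hf₀ (by fun_prop), geomMix]
  refine withDensity_congr_ae ?_
  filter_upwards [ae_ne_top_of_isFiniteMeasure_withDensity hf₀] with x hx
  rw [Pi.mul_apply, mul_left_comm (f₀ x),
    mul_div_rpow_eq_rpow_mul_rpow hx hs ht hst]

theorem geomMix_absolutelyContinuous_left [IsFiniteMeasure (π.withDensity f₀)]
    (hf₀ : AEMeasurable f₀ π) (hf₁ : AEMeasurable f₁ π) (hβ : 0 ≤ β) :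
    geomMix π f₀ f₁ β ≪ π.withDensity f₀ := by
  rw [geomMix_eq_withDensity_left hf₀ hf₁ hβ]
  exact withDensity_absolutelyContinuous _ _

theorem rnDeriv_geomMix_left_ae_eq [IsFiniteMeasure (π.withDensity f₀)]
    (hf₀ : AEMeasurable f₀ π) (hf₁ : AEMeasurable f₁ π) (hβ : 0 ≤ β) :
    (geomMix π f₀ f₁ β).rnDeriv (π.withDensity f₀) =ᵐ[π.withDensity f₀]
      fun x ↦ (geomConst π f₀ f₁ β)⁻¹ * (f₁ x / f₀ x) ^ (β / (1 + β)) := by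
  rw [geomMix_eq_withDensity_left hf₀ hf₁ hβ]
  exact Measure.rnDeriv_withDensity₀ _ <|
    (((hf₁.div hf₀).pow_const _).const_mul _).mono_ac (withDensity_absolutelyContinuous π f₀)

theorem llr_geomMix_left_ae_eq [IsFiniteMeasure (π.withDensity f₀)]
    (hf₀ : AEMeasurable f₀ π) (hf₁ : AEMeasurable f₁ π) (hβ : 0 ≤ β) :
    llr (geomMix π f₀ f₁ β) (π.withDensity f₀) =ᵐ[geomMix π f₀ f₁ β] fun x ↦
      β / (1 + β) * Real.log ((f₁ x).toReal / (f₀ x).toReal)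
        - Real.log (geomConst π f₀ f₁ β).toReal := by
  have := isFiniteMeasure_geomMix (β := β) hf₀ hf₁
  have hac := geomMix_absolutelyContinuous_left hf₀ hf₁ hβ
  filter_upwards [hac.ae_le (rnDeriv_geomMix_left_ae_eq hf₀ hf₁ hβ), Measure.rnDeriv_pos hac,
    hac.ae_le (Measure.rnDeriv_lt_top (geomMix π f₀ f₁ β) (π.withDensity f₀))] with x hx hpos hlt
  have hne := (ENNReal.toReal_pos hpos.ne' hlt.ne).ne'
  rw [hx, ENNReal.toReal_mul] at hne
  rw [llr, hx, ENNReal.toReal_mul,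
    Real.log_mul (left_ne_zero_of_mul hne) (right_ne_zero_of_mul hne), ENNReal.toReal_inv,
    Real.log_inv, ← ENNReal.toReal_rpow, log_rpow_of_nonneg ENNReal.toReal_nonneg,
    ENNReal.toReal_div, neg_add_eq_sub]

theorem llr_withDensity_left_ae_eq [IsFiniteMeasure (π.withDensity f₀)] [SigmaFinite μ]
    (hf₀ : AEMeasurable f₀ π) (hf₁ : AEMeasurable f₁ π) (hβ : 0 ≤ β)
    (hμ : μ ≪ geomMix π f₀ f₁ β) :
    llr μ (π.withDensity f₀) =ᵐ[μ] fun x ↦ llr μ (geomMix π f₀ f₁ β) x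
      + (β / (1 + β) * Real.log ((f₁ x).toReal / (f₀ x).toReal)
        - Real.log (geomConst π f₀ f₁ β).toReal) := by
  have := isFiniteMeasure_geomMix (β := β) hf₀ hf₁
  filter_upwards [llr_ae_eq_llr_add_llr hμ (geomMix_absolutelyContinuous_left hf₀ hf₁ hβ),
    hμ.ae_le (llr_geomMix_left_ae_eq hf₀ hf₁ hβ)] with x hchain hmix
  rw [hchain, hmix]

theorem llr_add_mul_llr_ae_eq [IsFiniteMeasure (π.withDensity f₀)]
    [IsFiniteMeasure (π.withDensity f₁)] [SigmaFinite μ]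
    (hf₀ : AEMeasurable f₀ π) (hf₁ : AEMeasurable f₁ π) (hβ : 0 ≤ β)
    (hμ : μ ≪ geomMix π f₀ f₁ β) :
    (fun x ↦ llr μ (π.withDensity f₀) x + β * llr μ (π.withDensity f₁) x) =ᵐ[μ]
      fun x ↦ (1 + β) *
        (llr μ (geomMix π f₀ f₁ β) x - Real.log (geomConst π f₀ f₁ β).toReal) := by
  have hllr₀ := llr_withDensity_left_ae_eq hf₀ hf₁ hβ hμ
  rcases hβ.eq_or_lt with rfl | hβpos
  · filter_upwards [hllr₀] with x hx₀
    rw [hx₀]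
    ring
  · have hμ' : μ ≪ geomMix π f₁ f₀ β⁻¹ := by rwa [← geomMix_comm hβpos]
    have hllr₁ := llr_withDensity_left_ae_eq hf₁ hf₀ (inv_nonneg.2 hβ) hμ'
    rw [← geomMix_comm hβpos, ← geomConst_comm hβpos] at hllr₁
    filter_upwards [hllr₀, hllr₁] with x hx₀ hx₁
    rw [hx₀, hx₁, ← inv_div (f₁ x).toReal, Real.log_inv]
    field_simp
    ring

theorem lintegral_div_rpow_ne_top [IsFiniteMeasure (π.withDensity f₀)]
    [IsFiniteMeasure (π.withDensity f₁)]
    (hf₀ : AEMeasurable f₀ π) (hf₁ : AEMeasurable f₁ π) {q : ℝ} (hq0 : 0 ≤ q) (hq1 : q ≤ 1) :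
    ∫⁻ x, (f₁ x / f₀ x) ^ q ∂π.withDensity f₀ ≠ ⊤ := by
  have hratio : ∫⁻ x, f₁ x / f₀ x ∂π.withDensity f₀ ≠ ⊤ := by
    rw [lintegral_withDensity_eq_lintegral_mul₀ hf₀ (g := fun x ↦ f₁ x / f₀ x) (hf₁.div hf₀)]
    exact ne_top_of_le_ne_top lintegral_ne_top_of_isFiniteMeasure_withDensity
      (lintegral_mono fun x ↦ ENNReal.mul_div_le)
  have hölder := ENNReal.lintegral_mul_norm_pow_le (μ := π.withDensity f₀) (g := 1)
    ((hf₁.div hf₀).mono_ac (withDensity_absolutelyContinuous π f₀)) aemeasurable_const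
    hq0 (sub_nonneg.2 hq1) (add_sub_cancel q 1)
  simp only [Pi.one_apply, ENNReal.one_rpow, mul_one, lintegral_one] at hölder
  exact ne_top_of_le_ne_top (ENNReal.mul_ne_top (ENNReal.rpow_ne_top_of_nonneg hq0 hratio)
    (ENNReal.rpow_ne_top_of_nonneg (sub_nonneg.2 hq1) (measure_ne_top _ _))) hölder

theorem klDiv_geomMix_left_ne_top [IsFiniteMeasure (π.withDensity f₀)]
    [IsFiniteMeasure (π.withDensity f₁)]
    (hf₀ : AEMeasurable f₀ π) (hf₁ : AEMeasurable f₁ π) (hβ : 0 ≤ β)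
    (hC0 : geomConst π f₀ f₁ β ≠ 0) :
    klDiv (geomMix π f₀ f₁ β) (π.withDensity f₀) ≠ ⊤ := by
  have := isFiniteMeasure_geomMix (β := β) hf₀ hf₁
  have hac := geomMix_absolutelyContinuous_left hf₀ hf₁ hβ
  -- The exponent `p > 1` is chosen so that `p * (β / (1 + β)) = 1 - (1 + β)⁻² ≤ 1`.
  set p : ℝ := 1 + 1 / (1 + β) with hp
  have hp1 : 1 < p := lt_add_of_pos_right 1 (by positivity)
  have hq0 : 0 ≤ β / (1 + β) * p := by positivity
  have hq1 : β / (1 + β) * p ≤ 1 := by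
    have hβp : β / (1 + β) * p = 1 - (1 / (1 + β)) ^ 2 := by rw [hp]; field_simp; ring
    rw [hβp]
    exact sub_le_self 1 (sq_nonneg _)
  refine klDiv_ne_top_iff.2 ⟨hac, integrable_llr_of_lintegral_rnDeriv_rpow_ne_top hac hp1 ?_⟩
  have hrpow : (fun x ↦ (geomMix π f₀ f₁ β).rnDeriv (π.withDensity f₀) x ^ p)
      =ᵐ[π.withDensity f₀] fun x ↦
        (geomConst π f₀ f₁ β)⁻¹ ^ p * (f₁ x / f₀ x) ^ (β / (1 + β) * p) := by
    filter_upwards [rnDeriv_geomMix_left_ae_eq hf₀ hf₁ hβ] with x hx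
    rw [hx, ENNReal.mul_rpow_of_nonneg _ _ (by positivity), ENNReal.rpow_mul]
  have hCp : (geomConst π f₀ f₁ β)⁻¹ ^ p ≠ ⊤ :=
    ENNReal.rpow_ne_top_of_nonneg (by positivity) (ENNReal.inv_ne_top.2 hC0)
  rw [lintegral_congr_ae hrpow, lintegral_const_mul' _ _ hCp]
  exact ENNReal.mul_ne_top hCp (lintegral_div_rpow_ne_top hf₀ hf₁ hq0 hq1)

theorem klDiv_geomMix_right_ne_top [IsFiniteMeasure (π.withDensity f₀)]
    [IsFiniteMeasure (π.withDensity f₁)]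
    (hf₀ : AEMeasurable f₀ π) (hf₁ : AEMeasurable f₁ π) (hβ : 0 < β)
    (hC0 : geomConst π f₀ f₁ β ≠ 0) :
    klDiv (geomMix π f₀ f₁ β) (π.withDensity f₁) ≠ ⊤ := by
  rw [geomMix_comm hβ]
  exact klDiv_geomMix_left_ne_top hf₁ hf₀ (inv_nonneg.2 hβ.le) (by rwa [← geomConst_comm hβ])

theorem integrable_llr_geomMix [IsFiniteMeasure (π.withDensity f₀)]
    [IsFiniteMeasure (π.withDensity f₁)] [IsFiniteMeasure μ]
    (hf₀ : AEMeasurable f₀ π) (hf₁ : AEMeasurable f₁ π) (hβ : 0 ≤ β)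
    (hμ : μ ≪ geomMix π f₀ f₁ β)
    (h : klDiv μ (π.withDensity f₀) + (β : EReal) * klDiv μ (π.withDensity f₁) ≠ ⊤) :
    Integrable (llr μ (geomMix π f₀ f₁ β)) μ := by
  have hint := (integrable_llr_add_mul_llr hβ h).congr (llr_add_mul_llr_ae_eq hf₀ hf₁ hβ hμ)
  have hβ' : IsUnit (1 + β) := IsUnit.mk0 _ (by positivity)
  simpa only [Pi.add_def, sub_add_cancel] using ((integrable_const_mul_iff hβ' _).1 hint).add
    (integrable_const (Real.log (geomConst π f₀ f₁ β).toReal))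

theorem klDiv_add_mul_klDiv_eq_integral_llr_geomMix [IsFiniteMeasure (π.withDensity f₀)]
    [IsFiniteMeasure (π.withDensity f₁)] [IsProbabilityMeasure μ]
    (hf₀ : AEMeasurable f₀ π) (hf₁ : AEMeasurable f₁ π) (hβ : 0 ≤ β)
    (hμ : μ ≪ geomMix π f₀ f₁ β)
    (h : klDiv μ (π.withDensity f₀) + (β : EReal) * klDiv μ (π.withDensity f₁) ≠ ⊤) :
    klDiv μ (π.withDensity f₀) + (β : EReal) * klDiv μ (π.withDensity f₁) =
      (((1 + β) * (∫ x, llr μ (geomMix π f₀ f₁ β) x ∂μ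
        - Real.log (geomConst π f₀ f₁ β).toReal) : ℝ) : EReal) := by
  rw [klDiv_add_mul_klDiv_eq_integral hβ h,
    integral_congr_ae (llr_add_mul_llr_ae_eq hf₀ hf₁ hβ hμ), integral_const_mul,
    integral_sub (integrable_llr_geomMix hf₀ hf₁ hβ hμ h) (integrable_const _), integral_const,
    probReal_univ, one_smul]

theorem neg_mul_log_geomConst_le_klDiv_add_mul_klDiv [IsFiniteMeasure (π.withDensity f₀)]
    [IsFiniteMeasure (π.withDensity f₁)] [IsProbabilityMeasure μ]
    (hf₀ : AEMeasurable f₀ π) (hf₁ : AEMeasurable f₁ π) (hβ : 0 ≤ β)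
    (hC0 : geomConst π f₀ f₁ β ≠ 0) :
    ((-(1 + β) * Real.log (geomConst π f₀ f₁ β).toReal : ℝ) : EReal) ≤
      klDiv μ (π.withDensity f₀) + (β : EReal) * klDiv μ (π.withDensity f₁) := by
  by_cases h : klDiv μ (π.withDensity f₀) + (β : EReal) * klDiv μ (π.withDensity f₁) = ⊤
  · exact h ▸ le_top
  have hCtop := geomConst_ne_top hf₀ hf₁ hβ
  have := isProbabilityMeasure_geomMix hf₀ hf₁ hC0 hCtop
  obtain ⟨h₀, h₁⟩ := (klDiv_add_mul_klDiv_ne_top_iff hβ).1 h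
  have hμ : μ ≪ geomMix π f₀ f₁ β :=
    (absolutelyContinuous_geomMix_iff hf₀ hf₁ hβ hCtop).2
      ⟨(klDiv_ne_top_iff.1 h₀).1, fun hβ0 ↦ (klDiv_ne_top_iff.1 (h₁ hβ0)).1⟩
  have gibbs : 0 ≤ ∫ x, llr μ (geomMix π f₀ f₁ β) x ∂μ := by
    simpa only [probReal_univ, add_sub_cancel_right] using
      InformationTheory.integral_llr_add_sub_measure_univ_nonneg hμ
        (integrable_llr_geomMix hf₀ hf₁ hβ hμ h)
  rw [klDiv_add_mul_klDiv_eq_integral_llr_geomMix hf₀ hf₁ hβ hμ h, EReal.coe_le_coe_iff]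
  linarith [mul_nonneg (by positivity : 0 ≤ 1 + β) gibbs]

theorem klDiv_geomMix_add_mul_klDiv_geomMix [IsFiniteMeasure (π.withDensity f₀)]
    [IsFiniteMeasure (π.withDensity f₁)]
    (hf₀ : AEMeasurable f₀ π) (hf₁ : AEMeasurable f₁ π) (hβ : 0 ≤ β)
    (hC0 : geomConst π f₀ f₁ β ≠ 0) :
    klDiv (geomMix π f₀ f₁ β) (π.withDensity f₀)
        + (β : EReal) * klDiv (geomMix π f₀ f₁ β) (π.withDensity f₁) =
      ((-(1 + β) * Real.log (geomConst π f₀ f₁ β).toReal : ℝ) : EReal) := by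
  have := isProbabilityMeasure_geomMix hf₀ hf₁ hC0 (geomConst_ne_top hf₀ hf₁ hβ)
  rw [klDiv_add_mul_klDiv_eq_integral_llr_geomMix hf₀ hf₁ hβ .rfl,
    integral_congr_ae (llr_self _)]
  · simp only [Pi.zero_apply, integral_zero, zero_sub, mul_neg, neg_mul]
  · exact (klDiv_add_mul_klDiv_ne_top_iff hβ).2 ⟨klDiv_geomMix_left_ne_top hf₀ hf₁ hβ hC0,
      fun hβ0 ↦ klDiv_geomMix_right_ne_top hf₀ hf₁ (hβ.lt_of_ne' hβ0) hC0⟩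

end GeomMix

theorem stmt2_general {Ω : Type*} [MeasurableSpace Ω] (π ν₀ ν₁ : Measure Ω)
    [IsFiniteMeasure ν₀] [IsFiniteMeasure ν₁]
    (f₀ f₁ : Ω → ℝ≥0∞) (hf₀ : AEMeasurable f₀ π) (hf₁ : AEMeasurable f₁ π)
    (hν₀ : ν₀ = π.withDensity f₀) (hν₁ : ν₁ = π.withDensity f₁)
    (h01 : ¬ ν₀ ⟂ₘ ν₁) (β : ℝ) (hβ : 0 ≤ β) :
    0 < geomConst π f₀ f₁ β ∧ geomConst π f₀ f₁ β < ⊤ ∧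
    IsLeast {r : EReal | ∃ μ : Measure Ω, IsProbabilityMeasure μ ∧ μ ≪ π ∧
        klDiv μ ν₀ + (β : EReal) * klDiv μ ν₁ = r}
      ((-(1 + β) * Real.log (geomConst π f₀ f₁ β).toReal : ℝ) : EReal) ∧
    IsProbabilityMeasure (geomMix π f₀ f₁ β) ∧ geomMix π f₀ f₁ β ≪ π ∧
    klDiv (geomMix π f₀ f₁ β) ν₀ + (β : EReal) * klDiv (geomMix π f₀ f₁ β) ν₁
      = ((-(1 + β) * Real.log (geomConst π f₀ f₁ β).toReal : ℝ) : EReal) := by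
  subst hν₀ hν₁
  have hC0 := geomConst_ne_zero hf₀ hf₁ hβ h01
  have hCtop := geomConst_ne_top hf₀ hf₁ hβ
  have hprob := isProbabilityMeasure_geomMix hf₀ hf₁ hC0 hCtop
  have hac : geomMix π f₀ f₁ β ≪ π := withDensity_absolutelyContinuous π _
  have hvalue := klDiv_geomMix_add_mul_klDiv_geomMix hf₀ hf₁ hβ hC0
  refine ⟨pos_iff_ne_zero.2 hC0, hCtop.lt_top, ⟨⟨_, hprob, hac, hvalue⟩, ?_⟩, hprob, hac, hvalue⟩
  rintro _ ⟨μ, hμ, -, rfl⟩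
  exact neg_mul_log_geomConst_le_klDiv_add_mul_klDiv hf₀ hf₁ hβ hC0

theorem stmt2 {Ω : Type*} [MeasurableSpace Ω] (π ν₀ ν₁ : Measure Ω) [SigmaFinite π]
    [IsFiniteMeasure ν₀] [IsFiniteMeasure ν₁]
    (f₀ f₁ : Ω → ℝ≥0∞) (hf₀ : Measurable f₀) (hf₁ : Measurable f₁)
    (hν₀ : ν₀ = π.withDensity f₀) (hν₁ : ν₁ = π.withDensity f₁)
    (h01 : ν₁ ≪ ν₀) (hν₁0 : ν₁ Set.univ ≠ 0)
    (β : ℝ) (hβ : 0 ≤ β) :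
    0 < geomConst π f₀ f₁ β ∧ geomConst π f₀ f₁ β < ⊤ ∧
    IsLeast {r : EReal | ∃ μ : Measure Ω, IsProbabilityMeasure μ ∧ μ ≪ π ∧
        klDiv μ ν₀ + (β : EReal) * klDiv μ ν₁ = r}
      ((-(1 + β) * Real.log (geomConst π f₀ f₁ β).toReal : ℝ) : EReal) ∧
    IsProbabilityMeasure (geomMix π f₀ f₁ β) ∧ geomMix π f₀ f₁ β ≪ π ∧
    klDiv (geomMix π f₀ f₁ β) ν₀ + (β : EReal) * klDiv (geomMix π f₀ f₁ β) ν₁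
      = ((-(1 + β) * Real.log (geomConst π f₀ f₁ β).toReal : ℝ) : EReal) :=
  stmt2_general π ν₀ ν₁ f₀ f₁ hf₀.aemeasurable hf₁.aemeasurable hν₀ hν₁ (fun h ↦ hν₁0 <|
    Measure.measure_univ_eq_zero.2 <|
      Measure.eq_zero_of_absolutelyContinuous_of_mutuallySingular h01 h.symm) β hβ
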